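/- arXiv:1201.6093 — 5 statements merged into one kernel-verified Lean document; each statement's English description precedes it below -/
import Mathlib

section
/- Let N be the lattice U ⊕ ⟨4⟩ ⊕ E8(2) and N' the lattice ⟨2⟩ ⊕ U(2) ⊕ E8, both of rank 11 and signature (2,9). Then there is a bijection between the orbit spaces D(N)/O(N) and D(N')/O(N') of the period domains modulo the full integral orthogonal groups. -/
open Matrix

/-- The hyperbolic plane `U`, with Gram matrix `[[0,1],[1,0]]`. -/
abbrev latU : Matrix (Fin 2) (Fin 2) ℤ := !![0, 1; 1, 0]

/-- The negative definite even unimodular lattice `E₈` (negative of the Cartan matrix). -/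
abbrev latE8 : Matrix (Fin 8) (Fin 8) ℤ :=
  !![-2,  0,  1,  0,  0,  0,  0,  0;
      0, -2,  0,  1,  0,  0,  0,  0;
      1,  0, -2,  1,  0,  0,  0,  0;
      0,  1,  1, -2,  1,  0,  0,  0;
      0,  0,  0,  1, -2,  1,  0,  0;
      0,  0,  0,  0,  1, -2,  1,  0;
      0,  0,  0,  0,  0,  1, -2,  1;
      0,  0,  0,  0,  0,  0,  1, -2]

/-- Orthogonal direct sum of two lattices (block-diagonal Gram matrix). -/
def dsum {a b : ℕ} (A : Matrix (Fin a) (Fin a) ℤ) (B : Matrix (Fin b) (Fin b) ℤ) :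
    Matrix (Fin (a + b)) (Fin (a + b)) ℤ :=
  Matrix.reindex finSumFinEquiv finSumFinEquiv (Matrix.fromBlocks A 0 0 B)

/-- `N = U ⊕ ⟨4⟩ ⊕ E8(2)`. -/
def gramN : Matrix (Fin 11) (Fin 11) ℤ := dsum (dsum latU !![(4 : ℤ)]) (2 • latE8)

/-- `N' = ⟨2⟩ ⊕ U(2) ⊕ E8`. -/
def gramN' : Matrix (Fin 11) (Fin 11) ℤ := dsum (dsum !![(2 : ℤ)] (2 • latU)) latE8

/-- The complex bilinear form attached to an integral Gram matrix `G`. -/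
noncomputable def cform {n : ℕ} (G : Matrix (Fin n) (Fin n) ℤ) (x y : Fin n → ℂ) : ℂ :=
  x ⬝ᵥ (G.map (Int.cast : ℤ → ℂ)).mulVec y

/-- `ω` represents a point of the period domain `D(N)`:
`ω ≠ 0`, `ωᵀGω = 0` and `ωᵀGω̄` is a positive real number. -/
def IsPeriodPt {n : ℕ} (G : Matrix (Fin n) (Fin n) ℤ) (ω : Fin n → ℂ) : Prop :=
  ω ≠ 0 ∧ cform G ω ω = 0 ∧ ∃ r : ℝ, 0 < r ∧ cform G ω (star ω) = (r : ℂ)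

/-- Two period points are related iff they define the same point of the projectivization
up to the action of an integral isometry `P ∈ O(G)`. -/
def periodRel {n : ℕ} (G : Matrix (Fin n) (Fin n) ℤ)
    (ω₁ ω₂ : {ω : Fin n → ℂ // IsPeriodPt G ω}) : Prop :=
  ∃ (c : ℂ) (P : Matrix (Fin n) (Fin n) ℤ), c ≠ 0 ∧ IsUnit P.det ∧ Pᵀ * G * P = G ∧
    (ω₂ : Fin n → ℂ) = c • (P.map (Int.cast : ℤ → ℂ)).mulVec (ω₁ : Fin n → ℂ)

/-- The orbit space `D(N)/O(N)` of the period domain modulo the integral orthogonal group. -/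
def OrbitSpace {n : ℕ} (G : Matrix (Fin n) (Fin n) ℤ) : Type :=
  Quot (periodRel G)

theorem cform_map {n : ℕ} (G G' T : Matrix (Fin n) (Fin n) ℤ) (h : Tᵀ * G * T = (2 : ℤ) • G')
    (x y : Fin n → ℂ) :
    cform G ((T.map (Int.cast : ℤ → ℂ)).mulVec x) ((T.map (Int.cast : ℤ → ℂ)).mulVec y)
      = 2 * cform G' x y := by
  have h2 : (T.map (Int.cast : ℤ → ℂ))ᵀ * G.map (Int.cast : ℤ → ℂ) * T.map (Int.cast : ℤ → ℂ)
      = (2 : ℂ) • G'.map (Int.cast : ℤ → ℂ) := by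
    have := congrArg (fun M : Matrix (Fin n) (Fin n) ℤ => M.map (Int.castRingHom ℂ)) h
    simp only [Matrix.map_mul] at this
    rw [Matrix.transpose_map] at this
    refine this.trans ?_
    ext i j
    rw [Matrix.map_apply, Matrix.smul_apply, Matrix.smul_apply]
    simp
  unfold cform
  rw [← Matrix.vecMul_transpose, ← Matrix.dotProduct_mulVec, Matrix.mulVec_mulVec, Matrix.mulVec_mulVec, h2,
    Matrix.smul_mulVec, dotProduct_smul, smul_eq_mul]

theorem star_map {n : ℕ} (T : Matrix (Fin n) (Fin n) ℤ) (x : Fin n → ℂ) :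
    star ((T.map (Int.cast : ℤ → ℂ)).mulVec x) = (T.map (Int.cast : ℤ → ℂ)).mulVec (star x) := by
  ext i
  simp [Matrix.mulVec, dotProduct]

theorem map_two {n : ℕ} (S T : Matrix (Fin n) (Fin n) ℤ) (h : S * T = (2 : ℤ) • 1)
    (x : Fin n → ℂ) :
    (S.map (Int.cast : ℤ → ℂ)).mulVec ((T.map (Int.cast : ℤ → ℂ)).mulVec x) = (2 : ℂ) • x := by
  have h2 : S.map (Int.cast : ℤ → ℂ) * T.map (Int.cast : ℤ → ℂ) = (2 : ℂ) • 1 := by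
    have := congrArg (fun M : Matrix (Fin n) (Fin n) ℤ => M.map (Int.castRingHom ℂ)) h
    simp only [Matrix.map_mul] at this
    refine this.trans ?_
    ext i j
    rw [Matrix.map_apply, Matrix.smul_apply, Matrix.smul_apply, Matrix.one_apply, Matrix.one_apply]
    by_cases hij : i = j <;> simp [hij]
  rw [Matrix.mulVec_mulVec, h2, Matrix.smul_mulVec, Matrix.one_mulVec]

theorem period_map {n : ℕ} (G G' S T : Matrix (Fin n) (Fin n) ℤ)
    (h : Tᵀ * G * T = (2 : ℤ) • G') (hST : S * T = (2 : ℤ) • 1)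
    (ω : Fin n → ℂ) (hω : IsPeriodPt G' ω) :
    IsPeriodPt G ((T.map (Int.cast : ℤ → ℂ)).mulVec ω) := by
  obtain ⟨h0, h1, r, hr, h2⟩ := hω
  refine ⟨?_, ?_, 2 * r, by positivity, ?_⟩
  · intro h3
    have := map_two S T hST ω
    rw [h3, Matrix.mulVec_zero] at this
    exact h0 ((smul_eq_zero.mp this.symm).resolve_left two_ne_zero)
  · rw [cform_map G G' T h, h1, mul_zero]
  · rw [star_map, cform_map G G' T h, h2]; push_cast; rfl

/-- The map on orbit spaces induced by a scaled embedding `T` of lattices, provided that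
conjugation by `T` maps `O(G')` into `O(G)`. -/
def orbitMap {n : ℕ} (G G' S T : Matrix (Fin n) (Fin n) ℤ)
    (h : Tᵀ * G * T = (2 : ℤ) • G') (hST : S * T = (2 : ℤ) • 1)
    (hO : ∀ Q : Matrix (Fin n) (Fin n) ℤ, IsUnit Q.det → Qᵀ * G' * Q = G' →
      ∃ P : Matrix (Fin n) (Fin n) ℤ, IsUnit P.det ∧ Pᵀ * G * P = G ∧ P * T = T * Q) :
    OrbitSpace G' → OrbitSpace G :=
  Quot.map (fun ω => ⟨(T.map (Int.cast : ℤ → ℂ)).mulVec ω.1, period_map G G' S T h hST _ ω.2⟩) (by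
    rintro ⟨a, ha⟩ ⟨b, hb⟩ ⟨c, Q, hc, hQ, hQG, e⟩
    obtain ⟨P, hP, hPG, hPT⟩ := hO Q hQ hQG
    refine ⟨c, P, hc, hP, hPG, ?_⟩
    have hm : P.map (Int.cast : ℤ → ℂ) * T.map (Int.cast : ℤ → ℂ)
        = T.map (Int.cast : ℤ → ℂ) * Q.map (Int.cast : ℤ → ℂ) := by
      have := congrArg (fun M : Matrix (Fin n) (Fin n) ℤ => M.map (Int.castRingHom ℂ)) hPT
      simp only [Matrix.map_mul] at this
      exact this
    dsimp only at e ⊢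
    rw [e, Matrix.mulVec_smul, Matrix.mulVec_mulVec, Matrix.mulVec_mulVec, hm])

theorem orbitMap_comp {n : ℕ} (G G' S T : Matrix (Fin n) (Fin n) ℤ)
    (h : Tᵀ * G * T = (2 : ℤ) • G') (hST : S * T = (2 : ℤ) • 1)
    (h' : Sᵀ * G' * S = (2 : ℤ) • G) (hTS : T * S = (2 : ℤ) • 1) (hO hO')
    (x : OrbitSpace G') : orbitMap G' G T S h' hTS hO' (orbitMap G G' S T h hST hO x) = x := by
  induction x using Quot.ind with
  | mk a =>
    symm
    refine Quot.sound ⟨2, 1, two_ne_zero, by simp, by simp, ?_⟩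
    simp [map_two S T hST]

/-- Integrality of the conjugate is all that has to be checked. -/
theorem conj_of_dvd {n : ℕ} (G G' S T : Matrix (Fin n) (Fin n) ℤ)
    (h' : Sᵀ * G' * S = (2 : ℤ) • G) (hST : S * T = (2 : ℤ) • 1) (hTS : T * S = (2 : ℤ) • 1)
    (Q : Matrix (Fin n) (Fin n) ℤ) (hQ : IsUnit Q.det) (hQG : Qᵀ * G' * Q = G')
    (hd : ∃ P, T * Q * S = (2 : ℤ) • P) :
    ∃ P : Matrix (Fin n) (Fin n) ℤ, IsUnit P.det ∧ Pᵀ * G * P = G ∧ P * T = T * Q := by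
  obtain ⟨P, hP⟩ := hd
  have inj : ∀ A B : Matrix (Fin n) (Fin n) ℤ, (2 : ℤ) • A = (2 : ℤ) • B → A = B :=
    fun A B hAB => smul_right_injective _ (two_ne_zero) hAB
  have e1 : P * T = T * Q := by
    apply inj
    rw [← Matrix.smul_mul, ← hP, Matrix.mul_assoc, hST]
    simp only [Matrix.smul_mul, Matrix.mul_smul, Matrix.mul_one, Matrix.one_mul, Matrix.mul_assoc]
  have e2 : S * P = Q * S := by
    apply inj
    rw [← Matrix.mul_smul, ← hP, ← Matrix.mul_assoc, ← Matrix.mul_assoc, hST]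
    simp only [Matrix.smul_mul, Matrix.mul_smul, Matrix.mul_one, Matrix.one_mul, Matrix.mul_assoc]
  refine ⟨P, ?_, ?_, e1⟩
  · have hdT : T.det ≠ 0 := by
      intro h0
      have := congrArg Matrix.det hTS
      rw [Matrix.det_mul, h0, zero_mul, Matrix.det_smul, Matrix.det_one] at this
      exact pow_ne_zero _ two_ne_zero ((mul_one _).symm.trans this.symm)
    have := congrArg Matrix.det e1
    rw [Matrix.det_mul, Matrix.det_mul, mul_comm] at this
    rwa [mul_left_cancel₀ hdT this]
  · apply inj
    have e3 : (2 : ℤ) • (Pᵀ * G * P) = Pᵀ * ((2 : ℤ) • G) * P := by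
      rw [Matrix.mul_smul, Matrix.smul_mul]
    calc (2 : ℤ) • (Pᵀ * G * P) = Pᵀ * ((2 : ℤ) • G) * P := e3
      _ = (S * P)ᵀ * G' * (S * P) := by
        rw [← h', Matrix.transpose_mul]; simp only [Matrix.mul_assoc]
      _ = Sᵀ * (Qᵀ * G' * Q) * S := by
        rw [e2, Matrix.transpose_mul]; simp only [Matrix.mul_assoc]
      _ = (2 : ℤ) • G := by rw [hQG, h']

/-- If `Q` is an isometry of `G`, then `G * Q = R * G` for an integral `R`. -/
theorem isom_swap {n : ℕ} (G Q : Matrix (Fin n) (Fin n) ℤ) (hQ : IsUnit Q.det)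
    (h : Qᵀ * G * Q = G) : ∃ R : Matrix (Fin n) (Fin n) ℤ, G * Q = R * G := by
  have hu : IsUnit Qᵀ.det := by rwa [Matrix.det_transpose]
  refine ⟨Qᵀ⁻¹, ?_⟩
  conv_rhs => rw [← h]
  rw [Matrix.mul_assoc, ← Matrix.mul_assoc _ Qᵀ, Matrix.nonsing_inv_mul _ hu, Matrix.one_mul]

/-- The embedding `N'(2) → N`, `(a,u,e) ↦ (2u,a,e)`. -/
def matT : Matrix (Fin 11) (Fin 11) ℤ :=
  dsum !![0, 2, 0; 0, 0, 2; 1, 0, 0] (1 : Matrix (Fin 8) (Fin 8) ℤ)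

/-- The embedding `N(2) → N'`, `(u,a,e) ↦ (2a,u,2e)`. -/
def matS : Matrix (Fin 11) (Fin 11) ℤ :=
  dsum !![0, 0, 2; 1, 0, 0; 0, 1, 0] ((2 : ℤ) • (1 : Matrix (Fin 8) (Fin 8) ℤ))

theorem matTS : matT * matS = (2 : ℤ) • 1 := by decide +kernel
theorem matST : matS * matT = (2 : ℤ) • 1 := by decide +kernel
theorem gramT_s1 : matTᵀ * gramN * matT = (2 : ℤ) • gramN' := by decide +kernel
theorem gramS : matSᵀ * gramN' * matS = (2 : ℤ) • gramN := by decide +kernel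

theorem hN (P : Matrix (Fin 11) (Fin 11) ℤ) (hP : IsUnit P.det) (h : Pᵀ * gramN * P = gramN) :
    ∃ Q, matS * P * matT = (2 : ℤ) • Q := by
  obtain ⟨R, hR⟩ := isom_swap _ _ hP h
  -- `S ≡ X G mod 2` and `G T ≡ 0 mod 2`
  have h1 : matS = dsum !![0, 0, 0; 0, 1, 0; 1, 0, 0] (0 : Matrix (Fin 8) (Fin 8) ℤ) * gramN
      + (2 : ℤ) • dsum !![0, 0, 1; 0, 0, 0; 0, 0, 0] (1 : Matrix (Fin 8) (Fin 8) ℤ) := by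
    decide +kernel
  have h2 : gramN * matT = (2 : ℤ) • dsum !![0, 0, 1; 0, 1, 0; 2, 0, 0] latE8 := by
    decide +kernel
  generalize dsum !![0, 0, 0; 0, 1, 0; 1, 0, 0] (0 : Matrix (Fin 8) (Fin 8) ℤ) = X at h1
  generalize dsum !![0, 0, 1; 0, 0, 0; 0, 0, 0] (1 : Matrix (Fin 8) (Fin 8) ℤ) = Y at h1
  generalize dsum !![0, 0, 1; 0, 1, 0; 2, 0, 0] latE8 = Z at h2
  refine ⟨X * R * Z + Y * P * matT, ?_⟩
  have : X * gramN * P * matT = (2 : ℤ) • (X * R * Z) := by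
    rw [Matrix.mul_assoc X, hR, Matrix.mul_assoc, Matrix.mul_assoc, h2]
    simp only [Matrix.smul_mul, Matrix.mul_smul, Matrix.mul_one, Matrix.one_mul, Matrix.mul_assoc]
  rw [h1, Matrix.add_mul, Matrix.add_mul, this, smul_add]
  simp only [Matrix.smul_mul, Matrix.mul_smul, Matrix.mul_one, Matrix.one_mul, Matrix.mul_assoc]

/-- The quadratic form of `N'` on vectors with even `E8`-component. -/
theorem even_a (v z : Fin 11 → ℤ) (hv : ∀ i : Fin 8, v (Fin.natAdd 3 i) = 2 * z (Fin.natAdd 3 i))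
    (h4 : (4 : ℤ) ∣ v ⬝ᵥ gramN'.mulVec v) : (2 : ℤ) ∣ v 0 := by
  have key : v ⬝ᵥ gramN'.mulVec v = 2 * v 0 ^ 2 + 4 * (v 1 * v 2) +
      (fun i : Fin 8 => v (Fin.natAdd 3 i)) ⬝ᵥ
        latE8.mulVec (fun i : Fin 8 => v (Fin.natAdd 3 i)) := by
    have hG : gramN' = !![2,0,0,0,0,0,0,0,0,0,0; 0,0,2,0,0,0,0,0,0,0,0; 0,2,0,0,0,0,0,0,0,0,0;
      0,0,0,-2,0,1,0,0,0,0,0; 0,0,0,0,-2,0,1,0,0,0,0; 0,0,0,1,0,-2,1,0,0,0,0;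
      0,0,0,0,1,1,-2,1,0,0,0; 0,0,0,0,0,0,1,-2,1,0,0; 0,0,0,0,0,0,0,1,-2,1,0;
      0,0,0,0,0,0,0,0,1,-2,1; 0,0,0,0,0,0,0,0,0,1,-2] := by decide +kernel
    rw [hG]
    simp [dotProduct, Matrix.mulVec, Fin.sum_univ_succ]
    ring
  have h8 : (fun i : Fin 8 => v (Fin.natAdd 3 i)) = (2 : ℤ) • (fun i => z (Fin.natAdd 3 i)) := by
    ext i; simp [hv]
  rw [key, h8, Matrix.mulVec_smul, dotProduct_smul, smul_dotProduct] at h4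
  simp only [smul_eq_mul] at h4
  have h5 : (2 : ℤ) ∣ v 0 ^ 2 := by omega
  exact Int.prime_two.dvd_of_dvd_pow h5

theorem hN' (Q : Matrix (Fin 11) (Fin 11) ℤ) (hQ : IsUnit Q.det) (h : Qᵀ * gramN' * Q = gramN') :
    ∃ P, matT * Q * matS = (2 : ℤ) • P := by
  obtain ⟨R, hR⟩ := isom_swap _ _ hQ h
  -- the `E8` rows of `Q S` are even
  have hinv : ∃ W : Matrix (Fin 8) (Fin 8) ℤ, dsum (0 : Matrix (Fin 3) (Fin 3) ℤ) W * gramN'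
      = dsum (0 : Matrix (Fin 3) (Fin 3) ℤ) (1 : Matrix (Fin 8) (Fin 8) ℤ) := by
    refine ⟨!![-4, -5, -7, -10, -8, -6, -4, -2;
      -5, -8, -10, -15, -12, -9, -6, -3;
      -7, -10, -14, -20, -16, -12, -8, -4;
      -10, -15, -20, -30, -24, -18, -12, -6;
      -8, -12, -16, -24, -20, -15, -10, -5;
      -6, -9, -12, -18, -15, -12, -8, -4;
      -4, -6, -8, -12, -10, -8, -6, -3;
      -2, -3, -4, -6, -5, -4, -3, -2], ?_⟩
    decide +kernel
  obtain ⟨W, hW⟩ := hinv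
  have h2 : gramN' * matS = (2 : ℤ) • dsum !![0, 0, 2; 0, 1, 0; 1, 0, 0] latE8 := by
    decide +kernel
  generalize dsum !![0, 0, 2; 0, 1, 0; 1, 0, 0] latE8 = Z at h2
  have hE : dsum (0 : Matrix (Fin 3) (Fin 3) ℤ) (1 : Matrix (Fin 8) (Fin 8) ℤ) * (Q * matS)
      = (2 : ℤ) • (dsum (0 : Matrix (Fin 3) (Fin 3) ℤ) W * R * Z) := by
    rw [← hW, Matrix.mul_assoc, ← Matrix.mul_assoc gramN', hR, Matrix.mul_assoc R, h2]
    simp only [Matrix.smul_mul, Matrix.mul_smul, Matrix.mul_one, Matrix.one_mul, Matrix.mul_assoc]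
  generalize dsum (0 : Matrix (Fin 3) (Fin 3) ℤ) W * R * Z = V at hE
  have hnorm : (Q * matS)ᵀ * gramN' * (Q * matS) = (2 : ℤ) • gramN := by
    rw [← gramS]
    conv_rhs => rw [← h]
    rw [Matrix.transpose_mul]; simp only [Matrix.mul_assoc]
  have hdiag : ∀ j, (2 : ℤ) ∣ gramN j j := by decide +kernel
  rw [Matrix.mul_assoc]
  generalize Q * matS = K at hE hnorm
  have hrow : ∀ (i : Fin 8) (j : Fin 11), K (Fin.natAdd 3 i) j = 2 * V (Fin.natAdd 3 i) j := by
    intro i j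
    have hr := congrFun (congrFun hE (Fin.natAdd 3 i)) j
    rw [Matrix.smul_apply, smul_eq_mul] at hr
    rw [← hr, Matrix.mul_apply, Finset.sum_eq_single (Fin.natAdd 3 i : Fin 11)]
    · have : ∀ i : Fin 8, dsum (0 : Matrix (Fin 3) (Fin 3) ℤ) (1 : Matrix (Fin 8) (Fin 8) ℤ)
          (Fin.natAdd 3 i) (Fin.natAdd 3 i) = 1 := by decide +kernel
      rw [this, one_mul]
    · intro b _ hb
      have : ∀ (i : Fin 8) (b : Fin 11), b ≠ Fin.natAdd 3 i →
          dsum (0 : Matrix (Fin 3) (Fin 3) ℤ) (1 : Matrix (Fin 8) (Fin 8) ℤ)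
          (Fin.natAdd 3 i) b = 0 := by decide +kernel
      rw [this i b hb, zero_mul]
    · simp
  have ha : ∀ j, (2 : ℤ) ∣ K 0 j := by
    intro j
    refine even_a (fun i => K i j) (fun i => V i j) (fun i => hrow i j) ?_
    have hn := congrFun (congrFun hnorm j) j
    have : ((fun i => K i j) ⬝ᵥ gramN'.mulVec fun i => K i j) = 2 * gramN j j := by
      rw [← smul_eq_mul, ← Matrix.smul_apply, ← hn, Matrix.mul_assoc, Matrix.mul_apply]
      rfl
    rw [this]
    have := hdiag j
    omega
  choose a ha using ha
  -- `T = A + E + 2 Y`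
  have hT : matT = dsum !![0, 0, 0; 0, 0, 0; 1, 0, 0] (0 : Matrix (Fin 8) (Fin 8) ℤ)
      + dsum (0 : Matrix (Fin 3) (Fin 3) ℤ) (1 : Matrix (Fin 8) (Fin 8) ℤ)
      + (2 : ℤ) • dsum !![0, 1, 0; 0, 0, 1; 0, 0, 0] (0 : Matrix (Fin 8) (Fin 8) ℤ) := by
    decide +kernel
  have hA : dsum !![0, 0, 0; 0, 0, 0; 1, 0, 0] (0 : Matrix (Fin 8) (Fin 8) ℤ) * K
      = (2 : ℤ) • Matrix.of (fun i j => if i = 2 then a j else 0) := by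
    have h3 : dsum !![0, 0, 0; 0, 0, 0; 1, 0, 0] (0 : Matrix (Fin 8) (Fin 8) ℤ)
      = Matrix.of (fun i b : Fin 11 => if b = 0 then (if i = 2 then (1 : ℤ) else 0) else 0) := by
      decide +kernel
    ext i j
    rw [h3, Matrix.mul_apply]
    simp only [Matrix.of_apply, ite_mul, zero_mul, Finset.sum_ite_eq', Finset.mem_univ, if_true, ha]
    by_cases hi : i = 2 <;> simp [hi]
  refine ⟨Matrix.of (fun i j => if i = 2 then a j else 0) + V
    + dsum !![0, 1, 0; 0, 0, 1; 0, 0, 0] (0 : Matrix (Fin 8) (Fin 8) ℤ) * K, ?_⟩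
  rw [hT, Matrix.add_mul, Matrix.add_mul, hA, hE, smul_add, smul_add, Matrix.smul_mul]

/-- There is a bijection between `D(N)/O(N)` and `D(N')/O(N')` for
`N = U ⊕ ⟨4⟩ ⊕ E8(2)` and `N' = ⟨2⟩ ⊕ U(2) ⊕ E8`. -/
theorem nodal_orbitSpace_equiv : Nonempty (OrbitSpace gramN ≃ OrbitSpace gramN') := by
  have hO := fun Q hQ hQG => conj_of_dvd gramN gramN' matS matT gramS matST matTS Q hQ hQG
    (hN' Q hQ hQG)
  have hO' := fun P hP hPG => conj_of_dvd gramN' gramN matT matS gramT_s1 matTS matST P hP hPG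
    (hN P hP hPG)
  exact ⟨⟨orbitMap gramN' gramN matT matS gramS matTS hO',
    orbitMap gramN gramN' matS matT gramT_s1 matST hO,
    orbitMap_comp _ _ _ _ _ _ _ _ _ _, orbitMap_comp _ _ _ _ _ _ _ _ _ _⟩⟩
end

section
/- Let T be the odd lattice ⟨1⟩ ⊕ U ⊕ E8(2) of rank 11 and signature (2,9). The set T₀ of vectors of T of even norm is a sublattice of index 2 in T, and T₀ is isometric to the lattice U ⊕ ⟨4⟩ ⊕ E8(2). -/
open Matrix

/-- The bilinear form of the lattice with Gram matrix `G` : `x ⋅ y = xᵀ G y`. -/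
def bform {n : ℕ} (G : Matrix (Fin n) (Fin n) ℤ) (x y : Fin n → ℤ) : ℤ :=
  x ⬝ᵥ G.mulVec y


/-- `T = ⟨1⟩ ⊕ U ⊕ E8(2)`, an odd lattice of rank 11 and signature (2,9). -/
def gramT : Matrix (Fin 11) (Fin 11) ℤ := dsum (dsum !![(1 : ℤ)] latU) (2 • latE8)

/-- `U ⊕ ⟨4⟩ ⊕ E8(2)`. -/
def gramT0 : Matrix (Fin 11) (Fin 11) ℤ := dsum (dsum latU !![(4 : ℤ)]) (2 • latE8)

lemma bform_dsum {a b : ℕ} (A : Matrix (Fin a) (Fin a) ℤ) (B : Matrix (Fin b) (Fin b) ℤ)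
    (x y : Fin (a + b) → ℤ) :
    bform (dsum A B) x y = bform A (fun i => x (Fin.castAdd b i)) (fun i => y (Fin.castAdd b i))
      + bform B (fun i => x (Fin.natAdd a i)) (fun i => y (Fin.natAdd a i)) := by
  simp [bform, dsum, dotProduct, mulVec, Fin.sum_univ_add]

lemma bform_two {n : ℕ} (A : Matrix (Fin n) (Fin n) ℤ) (x y : Fin n → ℤ) :
    bform (2 • A) x y = 2 * bform A x y := by
  rw [bform, bform, smul_mulVec, dotProduct_smul, nsmul_eq_mul]
  rfl

/-- The projection to the `E8` coordinates. -/
def prE (x : Fin 11 → ℤ) : Fin 8 → ℤ := fun i => x (Fin.natAdd 3 i)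

lemma bform_T (x y : Fin 11 → ℤ) : bform gramT x y =
    x 0 * y 0 + (x 1 * y 2 + x 2 * y 1) + 2 * bform latE8 (prE x) (prE y) := by
  have h := bform_dsum (dsum !![(1 : ℤ)] latU) (2 • latE8) x y
  refine h.trans ?_
  rw [bform_dsum, bform_two]
  congr 1
  simp [bform, dotProduct, mulVec, Fin.sum_univ_succ]

lemma bform_T0 (x y : Fin 11 → ℤ) : bform gramT0 x y =
    (x 0 * y 1 + x 1 * y 0) + 4 * (x 2 * y 2) + 2 * bform latE8 (prE x) (prE y) := by
  have h := bform_dsum (dsum latU !![(4 : ℤ)]) (2 • latE8) x y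
  refine h.trans ?_
  rw [bform_dsum, bform_two]
  congr 1
  simp [bform, dotProduct, mulVec, Fin.sum_univ_succ]
  ring

/-- Vectors with even first coordinate. -/
def evenS : Submodule ℤ (Fin 11 → ℤ) where
  carrier := {x | Even (x 0)}
  zero_mem' := by simp
  add_mem' := fun {a b} ha hb => Even.add (α := ℤ) ha hb
  smul_mem' := fun c x hx => Even.mul_left (α := ℤ) hx c

lemma mem_evenS (x : Fin 11 → ℤ) : x ∈ evenS ↔ Even (x 0) := Iff.rfl

/-- The embedding of `U ⊕ ⟨4⟩ ⊕ E8(2)` in `T`. -/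
def emb : (Fin 11 → ℤ) →ₗ[ℤ] (Fin 11 → ℤ) where
  toFun y := ![2 * y 2, y 0, y 1, y 3, y 4, y 5, y 6, y 7, y 8, y 9, y 10]
  map_add' x y := by
    ext i; fin_cases i <;> simp [mul_add]
  map_smul' c y := by
    ext i; fin_cases i <;> simp [mul_left_comm]

lemma emb_inj : Function.Injective emb := by
  intro x y h
  have h' : ∀ i, emb x i = emb y i := fun i => congrFun h i
  have h0 : 2 * x 2 = 2 * y 2 := h' 0
  ext i
  fin_cases i
  · exact h' 1
  · exact h' 2
  · change x 2 = y 2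
    omega
  · exact h' 3
  · exact h' 4
  · exact h' 5
  · exact h' 6
  · exact h' 7
  · exact h' 8
  · exact h' 9
  · exact h' 10

lemma emb_mem (y : Fin 11 → ℤ) : emb y ∈ evenS := even_two_mul (y 2)

lemma emb_surj (x : Fin 11 → ℤ) (hx : x ∈ evenS) : ∃ y, emb y = x := by
  obtain ⟨k, hk⟩ := (mem_evenS x).1 hx
  refine ⟨![x 1, x 2, k, x 3, x 4, x 5, x 6, x 7, x 8, x 9, x 10], ?_⟩
  ext i
  fin_cases i <;> first | rfl | skip
  change 2 * k = x 0
  omega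

lemma prE_emb (y : Fin 11 → ℤ) : prE (emb y) = prE y := by
  ext i
  fin_cases i <;> rfl

lemma bform_emb (x y : Fin 11 → ℤ) : bform gramT (emb x) (emb y) = bform gramT0 x y := by
  rw [bform_T, bform_T0, prE_emb, prE_emb]
  change 2 * x 2 * (2 * y 2) + (x 0 * y 1 + x 1 * y 0) + _ = _
  ring

/-- The set `T₀` of vectors of even norm in `T = ⟨1⟩ ⊕ U ⊕ E8(2)` is a sublattice of
index 2 in `T`, and it is isometric to `U ⊕ ⟨4⟩ ⊕ E8(2)`. -/
theorem even_sublattice_odd_coble :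
    ∃ S : Submodule ℤ (Fin 11 → ℤ),
      (∀ x, x ∈ S ↔ Even (bform gramT x x)) ∧
      S.toAddSubgroup.index = 2 ∧
      (∃ e : S ≃ₗ[ℤ] (Fin 11 → ℤ),
        ∀ x y : S, bform gramT0 (e x) (e y) = bform gramT x y) := by
  refine ⟨evenS, fun x => ?_, ?_, ?_⟩
  · rw [mem_evenS, bform_T]
    have : x 0 * x 0 + (x 1 * x 2 + x 2 * x 1) + 2 * bform latE8 (prE x) (prE x)
        = x 0 * x 0 + 2 * (x 1 * x 2 + bform latE8 (prE x) (prE x)) := by ring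
    rw [this, Int.even_add, Int.even_mul]
    simp
  · rw [AddSubgroup.index_eq_two_iff]
    refine ⟨fun _ => 1, fun b => ?_⟩
    change Xor (Even (b 0 + 1)) (Even (b 0))
    rw [Int.even_add_one]
    by_cases h : Even (b 0) <;> simp [Xor, h]
  · let f : (Fin 11 → ℤ) ≃ₗ[ℤ] evenS := LinearEquiv.ofBijective (emb.codRestrict evenS emb_mem)
      ⟨fun x y h => emb_inj (congrArg Subtype.val h), fun x => by
        obtain ⟨y, hy⟩ := emb_surj x.1 x.2
        exact ⟨y, Subtype.ext hy⟩⟩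
    have hf : ∀ y, ((f y : evenS) : Fin 11 → ℤ) = emb y := fun y => rfl
    refine ⟨f.symm, fun x y => ?_⟩
    rw [← bform_emb, ← hf, ← hf, f.apply_symm_apply, f.apply_symm_apply]
end

section
/- Let T be the odd lattice ⟨1⟩ ⊕ U ⊕ E8(2) of rank 11 and signature (2,9), and let T₀ be its even sublattice, consisting of all vectors of even norm. Then every isometry of T maps T₀ onto T₀, and the restriction map O(T) → O(T₀), f ↦ f|_{T₀}, is a group isomorphism; in particular every isometry of T₀ extends uniquely to an isometry of T. -/
open Matrix

/-- An isometry of the lattice `(ℤ¹¹, G)`: a ℤ-module automorphism preserving the form. -/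
def IsIsometry {n : ℕ} (G : Matrix (Fin n) (Fin n) ℤ)
    (f : (Fin n → ℤ) ≃ₗ[ℤ] (Fin n → ℤ)) : Prop :=
  ∀ x y, bform G (f x) (f y) = bform G x y

theorem bform_formula (x y : Fin 11 → ℤ) : bform gramT x y =
    x 0 * y 0 + x 1 * y 2 + x 2 * y 1 + 2 * (
      x 3 * (-2 * y 3 + y 5) + x 4 * (-2 * y 4 + y 6) + x 5 * (y 3 - 2 * y 5 + y 6)
      + x 6 * (y 4 + y 5 - 2 * y 6 + y 7) + x 7 * (y 6 - 2 * y 7 + y 8)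
      + x 8 * (y 7 - 2 * y 8 + y 9) + x 9 * (y 8 - 2 * y 9 + y 10)
      + x 10 * (y 9 - 2 * y 10)) := by
  have h : gramT = !![1,0,0,0,0,0,0,0,0,0,0; 0,0,1,0,0,0,0,0,0,0,0; 0,1,0,0,0,0,0,0,0,0,0;
      0,0,0,-4,0,2,0,0,0,0,0; 0,0,0,0,-4,0,2,0,0,0,0; 0,0,0,2,0,-4,2,0,0,0,0;
      0,0,0,0,2,2,-4,2,0,0,0; 0,0,0,0,0,0,2,-4,2,0,0; 0,0,0,0,0,0,0,2,-4,2,0;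
      0,0,0,0,0,0,0,0,2,-4,2; 0,0,0,0,0,0,0,0,0,2,-4] := by
    decide
  rw [h]
  simp only [bform, dotProduct, mulVec, Fin.sum_univ_succ, Fin.sum_univ_zero]
  simp
  ring

theorem bform_smul2 (x y : Fin 11 → ℤ) :
    bform gramT ((2 : ℤ) • x) ((2 : ℤ) • y) = 4 * bform gramT x y := by
  simp only [bform_formula, Pi.smul_apply, smul_eq_mul]; ring

theorem norm_even_iff (x : Fin 11 → ℤ) : Even (bform gramT x x) ↔ Even (x 0) := by
  have : bform gramT x x = x 0 * x 0 + 2 * (x 1 * x 2 + (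
      x 3 * (-2 * x 3 + x 5) + x 4 * (-2 * x 4 + x 6) + x 5 * (x 3 - 2 * x 5 + x 6)
      + x 6 * (x 4 + x 5 - 2 * x 6 + x 7) + x 7 * (x 6 - 2 * x 7 + x 8)
      + x 8 * (x 7 - 2 * x 8 + x 9) + x 9 * (x 8 - 2 * x 9 + x 10)
      + x 10 * (x 9 - 2 * x 10))) := by
    rw [bform_formula]; ring
  rw [this]
  simp [Int.even_add, Int.even_mul]

/-- A vector of `T₀` whose products with `T₀` are all divisible by 4 is twice a vector of `T`. -/
theorem half_of_div4 (w : Fin 11 → ℤ) (h0 : Even (w 0))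
    (h : ∀ y : Fin 11 → ℤ, Even (y 0) → (4 : ℤ) ∣ bform gramT w y) :
    ∃ z : Fin 11 → ℤ, w = (2 : ℤ) • z := by
  have key : ∀ i : Fin 11, i ≠ 0 → (4 : ℤ) ∣ bform gramT w (Pi.single i 1) := by
    intro i hi
    apply h
    rw [Pi.single_eq_of_ne hi.symm]
    exact Even.zero
  have h1 := key 1 (by decide)
  have h2 := key 2 (by decide)
  have h3 := key 3 (by decide)
  have h4 := key 4 (by decide)
  have h5 := key 5 (by decide)
  have h6 := key 6 (by decide)
  have h7 := key 7 (by decide)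
  have h8 := key 8 (by decide)
  have h9 := key 9 (by decide)
  have h10 := key 10 (by decide)
  clear key h
  simp [bform_formula] at h1 h2 h3 h4 h5 h6 h7 h8 h9 h10
  have hd : ∀ i : Fin 11, (2 : ℤ) ∣ w i := by
    rw [even_iff_two_dvd] at h0
    have a10 : (2 : ℤ) ∣ w 9 := by omega
    have a8 : (2 : ℤ) ∣ w 7 := by omega
    have a6 : (2 : ℤ) ∣ w 6 := by omega
    have a5 : (2 : ℤ) ∣ w 5 := by omega
    have a3 : (2 : ℤ) ∣ w 3 := by omega
    have a4 : (2 : ℤ) ∣ w 4 := by omega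
    have a88 : (2 : ℤ) ∣ w 8 := by omega
    have a1010 : (2 : ℤ) ∣ w 10 := by omega
    have a1 : (2 : ℤ) ∣ w 1 := by omega
    have a2 : (2 : ℤ) ∣ w 2 := by omega
    intro i
    fin_cases i <;> assumption
  choose z hz using hd
  exact ⟨z, by ext i; simp [hz i]⟩

theorem exists_half (S : Submodule ℤ (Fin 11 → ℤ))
    (hS : ∀ x, x ∈ S ↔ Even (bform gramT x x)) (h2 : ∀ x, (2 : ℤ) • x ∈ S)
    (g : S ≃ₗ[ℤ] S) (hg : ∀ x y : S, bform gramT (g x) (g y) = bform gramT x y)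
    (x : Fin 11 → ℤ) :
    ∃ z : Fin 11 → ℤ, (g ⟨(2 : ℤ) • x, h2 x⟩ : Fin 11 → ℤ) = (2 : ℤ) • z := by
  have hS' : ∀ x, x ∈ S ↔ Even (x 0) := fun x => (hS x).trans (norm_even_iff x)
  obtain ⟨u, hu⟩ : ∃ z : Fin 11 → ℤ,
      (g ⟨(2 : ℤ) • Pi.single 0 1, h2 _⟩ : Fin 11 → ℤ) = (2 : ℤ) • z := by
    apply half_of_div4
    · exact (hS' _).1 (g _).2
    · intro y hy
      have hyS := (hS' y).2 hy
      obtain ⟨v, hv⟩ := g.surjective ⟨y, hyS⟩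
      have e : y = (g v : Fin 11 → ℤ) := by rw [hv]
      rw [e, hg]
      obtain ⟨k, hk⟩ := (hS' _).1 v.2
      refine ⟨k, ?_⟩
      simp [bform_formula, hk]
      ring
  have hx' : x - x 0 • Pi.single 0 1 ∈ S := by
    rw [hS']; simp
  refine ⟨x 0 • u + (g ⟨_, hx'⟩ : Fin 11 → ℤ), ?_⟩
  have e : (⟨(2 : ℤ) • x, h2 x⟩ : S) = x 0 • ⟨(2 : ℤ) • Pi.single 0 1, h2 _⟩
      + (2 : ℤ) • ⟨_, hx'⟩ := by
    apply Subtype.ext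
    simp only [Submodule.coe_add, Submodule.coe_smul]
    module
  rw [e, map_add, map_smul, map_smul]
  simp only [Submodule.coe_add, Submodule.coe_smul, hu]
  module

/-- Every isometry of the odd lattice `T = ⟨1⟩ ⊕ U ⊕ E8(2)` maps the even sublattice
`T₀` onto itself, and restriction `O(T) → O(T₀)` is bijective: every isometry of `T₀`
is the restriction of a unique isometry of `T` (so restriction is a group isomorphism). -/
theorem isometries_restrict_even_sublattice
    (S : Submodule ℤ (Fin 11 → ℤ)) (hS : ∀ x, x ∈ S ↔ Even (bform gramT x x)) :
    (∀ f : (Fin 11 → ℤ) ≃ₗ[ℤ] (Fin 11 → ℤ), IsIsometry gramT f →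
      ∀ x, f x ∈ S ↔ x ∈ S) ∧
    (∀ g : S ≃ₗ[ℤ] S, (∀ x y : S, bform gramT (g x) (g y) = bform gramT x y) →
      ∃! f : {f : (Fin 11 → ℤ) ≃ₗ[ℤ] (Fin 11 → ℤ) // IsIsometry gramT f},
        ∀ x : S, (f : (Fin 11 → ℤ) ≃ₗ[ℤ] (Fin 11 → ℤ)) x = (g x : Fin 11 → ℤ)) := by
  have h2 : ∀ x, (2 : ℤ) • x ∈ S := by
    intro x
    rw [hS, norm_even_iff]
    simp
  have inj : ∀ a b : Fin 11 → ℤ, (2 : ℤ) • a = (2 : ℤ) • b → a = b := by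
    intro a b h
    exact smul_right_injective _ (two_ne_zero) h
  refine ⟨fun f hf x => by rw [hS, hS, hf], fun g hg => ?_⟩
  have hg' : ∀ x y : S, bform gramT (g.symm x) (g.symm y) = bform gramT x y := by
    intro x y
    rw [← hg, g.apply_symm_apply, g.apply_symm_apply]
  choose F hF using exists_half S hS h2 g hg
  choose F' hF' using exists_half S hS h2 g.symm hg'
  have hFF : ∀ x, F' (F x) = x := by
    intro x
    apply inj
    rw [← hF']
    have : (⟨(2 : ℤ) • F x, h2 (F x)⟩ : S) = g ⟨(2 : ℤ) • x, h2 x⟩ := Subtype.ext (hF x).symm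
    rw [this, g.symm_apply_apply]
  have hFF' : ∀ x, F (F' x) = x := by
    intro x
    apply inj
    rw [← hF]
    have : (⟨(2 : ℤ) • F' x, h2 (F' x)⟩ : S) = g.symm ⟨(2 : ℤ) • x, h2 x⟩ :=
      Subtype.ext (hF' x).symm
    rw [this, g.apply_symm_apply]
  let f : (Fin 11 → ℤ) ≃ₗ[ℤ] (Fin 11 → ℤ) :=
    { toFun := F
      invFun := F'
      left_inv := hFF
      right_inv := hFF'
      map_add' := by
        intro x y
        apply inj
        have : (⟨(2 : ℤ) • (x + y), h2 (x + y)⟩ : S)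
            = ⟨(2 : ℤ) • x, h2 x⟩ + ⟨(2 : ℤ) • y, h2 y⟩ := Subtype.ext (smul_add _ _ _)
        rw [← hF, this, map_add, Submodule.coe_add, hF, hF, smul_add]
      map_smul' := by
        intro c x
        apply inj
        have : (⟨(2 : ℤ) • (c • x), h2 (c • x)⟩ : S)
            = c • ⟨(2 : ℤ) • x, h2 x⟩ := Subtype.ext (smul_comm _ _ _)
        rw [← hF, this, map_smul, Submodule.coe_smul, hF, RingHom.id_apply, smul_comm] }
  have hf : IsIsometry gramT f := by
    intro x y
    have h := hg ⟨(2 : ℤ) • x, h2 x⟩ ⟨(2 : ℤ) • y, h2 y⟩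
    rw [hF, hF, bform_smul2, bform_smul2] at h
    change bform gramT (F x) (F y) = _
    linarith
  refine ⟨⟨f, hf⟩, ?_, ?_⟩
  · intro x
    change F x = _
    apply inj
    have e : (⟨(2 : ℤ) • (x : Fin 11 → ℤ), h2 x⟩ : S) = (2 : ℤ) • x := rfl
    rw [← hF, e, map_smul, Submodule.coe_smul]
  · rintro ⟨f', hf'⟩ h
    apply Subtype.ext
    apply LinearEquiv.ext
    intro x
    change f' x = F x
    apply inj
    rw [← hF, ← h, ← map_smul]
end

section
/- Let M be the even lattice U ⊕ D8 ⊕ A1 of rank 11. Then the group O(q_M) of automorphisms of the discriminant group A_M preserving the discriminant quadratic form q_M has order 2, and the natural homomorphism O(M) → O(q_M) is surjective. -/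
open Matrix

/-- The negative definite lattice `D₈` (negative of the Cartan matrix of `D₈`). -/
abbrev latD8 : Matrix (Fin 8) (Fin 8) ℤ :=
  !![-2,  1,  0,  0,  0,  0,  0,  0;
      1, -2,  1,  0,  0,  0,  0,  0;
      0,  1, -2,  1,  0,  0,  0,  0;
      0,  0,  1, -2,  1,  0,  0,  0;
      0,  0,  0,  1, -2,  1,  0,  0;
      0,  0,  0,  0,  1, -2,  1,  1;
      0,  0,  0,  0,  0,  1, -2,  0;
      0,  0,  0,  0,  0,  1,  0, -2]

/-- Coordinatewise coercion `ℤⁿ → ℚⁿ` as a `ℤ`-linear map. -/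
def castMap (n : ℕ) : (Fin n → ℤ) →ₗ[ℤ] (Fin n → ℚ) :=
  (Algebra.linearMap ℤ ℚ).compLeft (Fin n)

/-- The standard lattice `ℤⁿ ⊆ ℚⁿ`. -/
def intLat (n : ℕ) : Submodule ℤ (Fin n → ℚ) := LinearMap.range (castMap n)

/-- The dual lattice `L* = {x ∈ ℚⁿ : Gx ∈ ℤⁿ}` of the lattice with Gram matrix `G`. -/
def dualLat {n : ℕ} (G : Matrix (Fin n) (Fin n) ℤ) : Submodule ℤ (Fin n → ℚ) :=
  Submodule.comap ((Matrix.mulVecLin (G.map (Int.cast : ℤ → ℚ))).restrictScalars ℤ) (intLat n)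

/-- The discriminant group `A_L = L*/ℤⁿ`. -/
abbrev discGroup {n : ℕ} (G : Matrix (Fin n) (Fin n) ℤ) :=
  dualLat G ⧸ (intLat n).comap (dualLat G).subtype

/-- The class of a dual vector in the discriminant group `A_L`. -/
def dmk {n : ℕ} {G : Matrix (Fin n) (Fin n) ℤ} (x : dualLat G) : discGroup G :=
  Submodule.Quotient.mk x

/-- The rational quadratic form `x ↦ xᵀGx` on `ℚⁿ`; on the dual lattice of an even lattice,
its reduction mod `2ℤ` is the discriminant quadratic form `q_L`. -/
def qQ {n : ℕ} (G : Matrix (Fin n) (Fin n) ℤ) (x : Fin n → ℚ) : ℚ :=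
  x ⬝ᵥ (G.map (Int.cast : ℤ → ℚ)).mulVec x

/-- An automorphism of the discriminant group preserves the discriminant quadratic form
`q_L : A_L → ℚ/2ℤ`. -/
def PreservesDiscForm {n : ℕ} {G : Matrix (Fin n) (Fin n) ℤ}
    (φ : discGroup G ≃+ discGroup G) : Prop :=
  ∀ x y : dualLat G, φ (dmk x) = dmk y →
    ∃ m : ℤ, qQ G (y : Fin n → ℚ) - qQ G (x : Fin n → ℚ) = 2 * m

/-- `M = U ⊕ D8 ⊕ A1`, an even lattice of rank 11. -/
def gramM : Matrix (Fin 11) (Fin 11) ℤ := dsum (dsum latU latD8) !![(-2 : ℤ)]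

lemma gram_mulVec (x : Fin 11 → ℚ) : (gramM.map (Int.cast : ℤ → ℚ)).mulVec x =
    ![x 1, x 0, -2 * x 2 + x 3, x 2 - 2 * x 3 + x 4, x 3 - 2 * x 4 + x 5, x 4 - 2 * x 5 + x 6,
      x 5 - 2 * x 6 + x 7, x 6 - 2 * x 7 + x 8 + x 9, x 7 - 2 * x 8, x 7 - 2 * x 9,
      -2 * x 10] := by
  have h : gramM =
   !![0,1,0,0,0,0,0,0,0,0,0;
     1,0,0,0,0,0,0,0,0,0,0;
     0,0,-2,1,0,0,0,0,0,0,0;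
     0,0,1,-2,1,0,0,0,0,0,0;
     0,0,0,1,-2,1,0,0,0,0,0;
     0,0,0,0,1,-2,1,0,0,0,0;
     0,0,0,0,0,1,-2,1,0,0,0;
     0,0,0,0,0,0,1,-2,1,1,0;
     0,0,0,0,0,0,0,1,-2,0,0;
     0,0,0,0,0,0,0,1,0,-2,0;
     0,0,0,0,0,0,0,0,0,0,-2] := by decide +kernel
  rw [h]
  ext i
  fin_cases i <;>
    simp [Matrix.mulVec, dotProduct, Fin.sum_univ_succ] <;> try ring

lemma mem_int {n : ℕ} (x : Fin n → ℚ) : x ∈ intLat n ↔ ∃ z : Fin n → ℤ, ∀ i, x i = z i := by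
  constructor
  · rintro ⟨z, rfl⟩
    exact ⟨z, fun i => rfl⟩
  · rintro ⟨z, h⟩
    exact ⟨z, funext fun i => (h i).symm⟩

lemma mem_dual (x : Fin 11 → ℚ) : x ∈ dualLat gramM ↔ ∃ z : Fin 11 → ℤ, 
    ∀ i, ![x 1, x 0, -2 * x 2 + x 3, x 2 - 2 * x 3 + x 4, x 3 - 2 * x 4 + x 5, x 4 - 2 * x 5 + x 6,
      x 5 - 2 * x 6 + x 7, x 6 - 2 * x 7 + x 8 + x 9, x 7 - 2 * x 8, x 7 - 2 * x 9,
      -2 * x 10] i = z i := by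
  rw [← gram_mulVec, ← mem_int]
  rfl

lemma dmk_eq (x y : dualLat gramM) : (dmk x : discGroup gramM) = dmk y ↔
    ∃ n : Fin 11 → ℤ, ∀ i, (x : Fin 11 → ℚ) i - (y : Fin 11 → ℚ) i = n i := by
  unfold dmk
  rw [Submodule.Quotient.eq, Submodule.mem_comap, mem_int]
  rfl

lemma qQ_eq (x : Fin 11 → ℚ) : qQ gramM x = 2 * (x 0 * x 1 - x 2 ^ 2 - x 3 ^ 2 - x 4 ^ 2 - x 5 ^ 2
    - x 6 ^ 2 - x 7 ^ 2 - x 8 ^ 2 - x 9 ^ 2 - x 10 ^ 2 + x 2 * x 3 + x 3 * x 4 + x 4 * x 5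
    + x 5 * x 6 + x 6 * x 7 + x 7 * x 8 + x 7 * x 9) := by
  unfold qQ
  rw [gram_mulVec]
  simp [dotProduct, Fin.sum_univ_succ]
  ring

lemma q_congr (x y : dualLat gramM) (h : (dmk x : discGroup gramM) = dmk y) :
    ∃ m : ℤ, qQ gramM (x : Fin 11 → ℚ) - qQ gramM (y : Fin 11 → ℚ) = 2 * m := by
  obtain ⟨n, hn⟩ := (dmk_eq x y).1 h
  obtain ⟨z, hz⟩ := (mem_dual _).1 y.2
  obtain ⟨x, hx⟩ := x
  obtain ⟨y, hy⟩ := y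
  simp only at hn hz ⊢
  have hx' : ∀ i, x i = y i + n i := fun i => by linarith [hn i]
  simp [Fin.forall_fin_succ] at hz
  refine ⟨n 0 * n 1 - n 2 ^ 2 - n 3 ^ 2 - n 4 ^ 2 - n 5 ^ 2
    - n 6 ^ 2 - n 7 ^ 2 - n 8 ^ 2 - n 9 ^ 2 - n 10 ^ 2 + n 2 * n 3 + n 3 * n 4 + n 4 * n 5
    + n 5 * n 6 + n 6 * n 7 + n 7 * n 8 + n 7 * n 9 + n 0 * z 0 + n 1 * z 1 + n 2 * z 2 + n 3 * z 3
    + n 4 * z 4 + n 5 * z 5 + n 6 * z 6 + n 7 * z 7 + n 8 * z 8 + n 9 * z 9 + n 10 * z 10, ?_⟩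
  simp only [qQ_eq, hx']
  push_cast
  obtain ⟨h0, h1, h2, h3, h4, h5, h6, h7, h8, h9, h10⟩ := hz
  rw [← h0, ← h1, ← h2, ← h3, ← h4, ← h5, ← h6, ← h7, ← h8, ← h9, ← h10]
  ring

def E (i j k : ℤ) : dualLat gramM :=
  ⟨![0, 0, (i + j) / 2, 0, (i + j) / 2, 0, (i + j) / 2, 0, i / 2, j / 2, k / 2], by
    rw [mem_dual]
    refine ⟨![0, 0, -(i + j), i + j, -(i + j), i + j, -(i + j), i + j, -i, -j, -k], ?_⟩
    intro t
    fin_cases t <;> simp <;> ring⟩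

def D (i j k : ℤ) : discGroup gramM := dmk (E i j k)

lemma D_add (i j k i' j' k' : ℤ) : D i j k + D i' j' k' = D (i + i') (j + j') (k + k') := by
  have : E i j k + E i' j' k' = E (i + i') (j + j') (k + k') := by
    apply Subtype.ext
    ext t
    fin_cases t <;> simp [E] <;> ring
  unfold D
  rw [← this]
  rfl

lemma D_eq (i j k i' j' k' : ℤ) : D i j k = D i' j' k' ↔
    i % 2 = i' % 2 ∧ j % 2 = j' % 2 ∧ k % 2 = k' % 2 := by
  unfold D
  rw [dmk_eq]
  constructor
  · rintro ⟨n, hn⟩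
    have h8 := hn 8
    have h9 := hn 9
    have h10 := hn 10
    simp [E] at h8 h9 h10
    have e8 : i - i' = 2 * n 8 := by
      have : (i : ℚ) - i' = 2 * n 8 := by linarith
      exact_mod_cast this
    have e9 : j - j' = 2 * n 9 := by
      have : (j : ℚ) - j' = 2 * n 9 := by linarith
      exact_mod_cast this
    have e10 : k - k' = 2 * n 10 := by
      have : (k : ℚ) - k' = 2 * n 10 := by linarith
      exact_mod_cast this
    omega
  · rintro ⟨h1, h2, h3⟩
    obtain ⟨a, rfl⟩ : ∃ a, i = i' + 2 * a := ⟨(i - i') / 2, by omega⟩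
    obtain ⟨b, rfl⟩ : ∃ a, j = j' + 2 * a := ⟨(j - j') / 2, by omega⟩
    obtain ⟨c, rfl⟩ : ∃ a, k = k' + 2 * a := ⟨(k - k') / 2, by omega⟩
    refine ⟨![0, 0, a + b, 0, a + b, 0, a + b, 0, a, b, c], ?_⟩
    intro t
    fin_cases t <;> simp [E] <;> ring

lemma dmk_D (x : dualLat gramM) : ∃ i j k : ℤ, dmk x = D i j k ∧ 
    (x : Fin 11 → ℚ) 8 = i / 2 ∧ (x : Fin 11 → ℚ) 9 = j / 2 ∧ (x : Fin 11 → ℚ) 10 = k / 2 := by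
  obtain ⟨z, hz⟩ := (mem_dual _).1 x.2
  unfold D
  simp only [dmk_eq]
  obtain ⟨x, hx⟩ := x
  simp only at hz ⊢
  simp [Fin.forall_fin_succ] at hz
  obtain ⟨h0, h1, h2, h3, h4, h5, h6, h7, h8, h9, h10⟩ := hz
  obtain ⟨w, hw⟩ : ∃ w : ℤ, w = -2 * (z 2 + z 3 + z 4 + z 5 + z 6 + z 7) - (z 8 + z 9) := ⟨_, rfl⟩
  have hwq : (w : ℚ) = 2 * x 2 := by
    rw [hw]; push_cast; rw [← h2, ← h3, ← h4, ← h5, ← h6, ← h7, ← h8, ← h9]; ring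
  obtain ⟨x7, hx7⟩ : ∃ w' : ℤ, w' = 3 * w + 5 * z 2 + 4 * z 3 + 3 * z 4 + 2 * z 5 + z 6 := ⟨_, rfl⟩
  have hx7q : (x7 : ℚ) = x 7 := by
    rw [hx7]; push_cast; rw [hwq, ← h2, ← h3, ← h4, ← h5, ← h6]; ring
  have hwz : (w : ℚ) = -2 * (z 2 + z 3 + z 4 + z 5 + z 6 + z 7) - (z 8 + z 9) := by
    rw [hw]; push_cast; rfl
  have hx7z : (x7 : ℚ) = 3 * w + 5 * z 2 + 4 * z 3 + 3 * z 4 + 2 * z 5 + z 6 := by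
    rw [hx7]; push_cast; rfl
  -- x 2 - (i + j)/2 
  obtain ⟨d, hd⟩ : ∃ d : ℤ, d = - (z 2 + z 3 + z 4 + z 5 + z 6 + z 7) - x7 := ⟨_, rfl⟩
  have hdq : (d : ℚ) = - (z 2 + z 3 + z 4 + z 5 + z 6 + z 7) - x7 := by
    rw [hd]; push_cast; rfl
  refine ⟨x7 - z 8, x7 - z 9, - z 10, ⟨![z 1, z 0, d, z 2 + w, d + 2 * z 2 + z 3 + w,
    3 * z 2 + 2 * z 3 + z 4 + 2 * w,
    d + 2 * w + 4 * z 2 + 3 * z 3 + 2 * z 4 + z 5, x7, 0, 0, 0], ?_⟩, ?_, ?_, ?_⟩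
  · intro t
    fin_cases t <;> simp [E] <;> linarith
  all_goals push_cast; linarith

lemma exD (c : discGroup gramM) : ∃ i j k : ℤ, c = D i j k := by
  obtain ⟨x, rfl⟩ := Submodule.Quotient.mk_surjective _ c
  obtain ⟨i, j, k, h, -⟩ := dmk_D x
  exact ⟨i, j, k, h⟩

lemma D_eq_smul (i j k : ℤ) : D i j k = i • D 1 0 0 + j • D 0 1 0 + k • D 0 0 1 := by
  have : E i j k = i • E 1 0 0 + j • E 0 1 0 + k • E 0 0 1 := by
    apply Subtype.ext
    ext t
    fin_cases t <;> simp [E] <;> ring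
  unfold D
  rw [this]
  rfl

lemma phi_ext (φ ψ : discGroup gramM ≃+ discGroup gramM) (h1 : φ (D 1 0 0) = ψ (D 1 0 0))
    (h2 : φ (D 0 1 0) = ψ (D 0 1 0)) (h3 : φ (D 0 0 1) = ψ (D 0 0 1)) : φ = ψ := by
  ext c
  obtain ⟨i, j, k, rfl⟩ := exD c
  rw [D_eq_smul]
  simp only [map_add, map_zsmul, h1, h2, h3]

lemma pres_D (φ : discGroup gramM ≃+ discGroup gramM) (hφ : PreservesDiscForm φ)
    (i j k i' j' k' : ℤ) (h : φ (D i j k) = D i' j' k') :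
    ∃ m : ℤ, (4 * i' ^ 2 + 4 * j' ^ 2 + 6 * (i' * j') + k' ^ 2)
      - (4 * i ^ 2 + 4 * j ^ 2 + 6 * (i * j) + k ^ 2) = 4 * m := by
  obtain ⟨m, hm⟩ := hφ _ _ h
  refine ⟨-m, ?_⟩
  simp [qQ_eq, E] at hm
  have : ((4 * i' ^ 2 + 4 * j' ^ 2 + 6 * (i' * j') + k' ^ 2)
      - (4 * i ^ 2 + 4 * j ^ 2 + 6 * (i * j) + k ^ 2) : ℚ) = 4 * (-m) := by
    linarith
  exact_mod_cast this

lemma exD01 (c : discGroup gramM) : ∃ i j k : ℤ, c = D i j k ∧ (i = 0 ∨ i = 1) ∧ (j = 0 ∨ j = 1)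
    ∧ (k = 0 ∨ k = 1) := by
  obtain ⟨i, j, k, rfl⟩ := exD c
  exact ⟨i % 2, j % 2, k % 2, by rw [D_eq]; omega, by omega, by omega, by omega⟩

lemma classify (φ : discGroup gramM ≃+ discGroup gramM) (hφ : PreservesDiscForm φ) :
    φ (D 0 0 1) = D 0 0 1 ∧ ((φ (D 1 0 0) = D 1 0 0 ∧ φ (D 0 1 0) = D 0 1 0) ∨ 
      (φ (D 1 0 0) = D 0 1 0 ∧ φ (D 0 1 0) = D 1 0 0)) := by
  obtain ⟨i, j, k, h1, hi, hj, hk⟩ := exD01 (φ (D 1 0 0))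
  obtain ⟨i', j', k', h2, hi', hj', hk'⟩ := exD01 (φ (D 0 1 0))
  obtain ⟨i'', j'', k'', h3, hi'', hj'', hk''⟩ := exD01 (φ (D 0 0 1))
  have n1 : D i j k ≠ D 0 0 0 := by
    have h0 : φ (D 0 0 0) = D 0 0 0 := by
      have : D 0 0 0 = 0 := by rw [D_eq_smul]; simp
      rw [this, map_zero]
    rw [← h1, ← h0]
    intro h
    have := φ.injective h
    simp [D_eq] at this
  have n2 : D i' j' k' ≠ D 0 0 0 := by
    have h0 : φ (D 0 0 0) = D 0 0 0 := by
      have : D 0 0 0 = 0 := by rw [D_eq_smul]; simp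
      rw [this, map_zero]
    rw [← h2, ← h0]
    intro h
    have := φ.injective h
    simp [D_eq] at this
  have n3 : D i' j' k' ≠ D i j k := by
    rw [← h2, ← h1]
    intro h
    have := φ.injective h
    simp [D_eq] at this
  have h4 : φ (D 1 1 1) = D (i + i' + i'') (j + j' + j'') (k + k' + k'') := by
    rw [← D_add, ← D_add, ← h1, ← h2, ← h3, ← map_add, ← map_add, D_add, D_add]; rfl
  obtain ⟨m1, p1⟩ := pres_D φ hφ _ _ _ _ _ _ h1
  obtain ⟨m2, p2⟩ := pres_D φ hφ _ _ _ _ _ _ h2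
  obtain ⟨m3, p3⟩ := pres_D φ hφ _ _ _ _ _ _ h3
  obtain ⟨m4, p4⟩ := pres_D φ hφ _ _ _ _ _ _ h4
  rw [h1, h2, h3]
  clear h1 h2 h3 h4
  simp only [D_eq, ne_eq] at *
  have q1 : k = 0 ∧ ((i = 1 ∧ j = 0) ∨ (i = 0 ∧ j = 1)) := by
    clear p2 p3 p4 n2 n3
    rcases hi with rfl | rfl <;> rcases hj with rfl | rfl <;> rcases hk with rfl | rfl <;>
      norm_num at * <;> omega
  have q2 : k' = 0 ∧ ((i' = 1 ∧ j' = 0) ∨ (i' = 0 ∧ j' = 1)) := by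
    clear p1 p3 p4 n1 n3
    rcases hi' with rfl | rfl <;> rcases hj' with rfl | rfl <;> rcases hk' with rfl | rfl <;>
      norm_num at * <;> omega
  clear p1 p2 n1 n2
  obtain ⟨rfl, q1⟩ := q1
  obtain ⟨rfl, q2⟩ := q2
  rcases q1 with ⟨rfl, rfl⟩ | ⟨rfl, rfl⟩ <;> rcases q2 with ⟨rfl, rfl⟩ | ⟨rfl, rfl⟩ <;>
    rcases hi'' with rfl | rfl <;> rcases hj'' with rfl | rfl <;> rcases hk'' with rfl | rfl <;>
      norm_num at * <;> omega

/-- the swap of the two tail roots of `D8` -/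
def sw : Matrix (Fin 11) (Fin 11) ℤ := (Equiv.swap (8 : Fin 11) 9).permMatrix ℤ

lemma sw_mulVec (x : Fin 11 → ℚ) : (sw.map (Int.cast : ℤ → ℚ)).mulVec x =
    ![x 0, x 1, x 2, x 3, x 4, x 5, x 6, x 7, x 9, x 8, x 10] := by
  have : sw.map (Int.cast : ℤ → ℚ) = (Equiv.swap (8 : Fin 11) 9).permMatrix ℚ := by
    unfold sw
    ext i j
    simp [Equiv.Perm.permMatrix, PEquiv.toMatrix_apply]
  rw [this, Matrix.permMatrix_mulVec]
  ext i
  fin_cases i <;> rfl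

def swx (x : Fin 11 → ℚ) : Fin 11 → ℚ :=
  ![x 0, x 1, x 2, x 3, x 4, x 5, x 6, x 7, x 9, x 8, x 10]

lemma swx_swx (x : Fin 11 → ℚ) : swx (swx x) = x := by
  ext i
  fin_cases i <;> rfl

lemma swx_add (x y : Fin 11 → ℚ) : swx (x + y) = swx x + swx y := by
  ext i
  fin_cases i <;> rfl

lemma swx_mem (x : Fin 11 → ℚ) (hx : x ∈ dualLat gramM) : swx x ∈ dualLat gramM := by
  rw [mem_dual] at *
  obtain ⟨z, hz⟩ := hx
  refine ⟨![z 0, z 1, z 2, z 3, z 4, z 5, z 6, z 7, z 9, z 8, z 10], ?_⟩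
  simp [Fin.forall_fin_succ] at hz
  intro t
  fin_cases t <;> simp [swx] <;> linarith

lemma swx_int (x : Fin 11 → ℚ) (hx : x ∈ intLat 11) : swx x ∈ intLat 11 := by
  rw [mem_int] at *
  obtain ⟨z, hz⟩ := hx
  refine ⟨![z 0, z 1, z 2, z 3, z 4, z 5, z 6, z 7, z 9, z 8, z 10], ?_⟩
  intro t
  fin_cases t <;> simp [swx, hz]

def swHom : dualLat gramM →+ dualLat gramM where
  toFun x := ⟨swx x, swx_mem _ x.2⟩
  map_zero' := by
    apply Subtype.ext
    ext i
    fin_cases i <;> rfl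
  map_add' x y := Subtype.ext (swx_add _ _)

def swQ : discGroup gramM →ₗ[ℤ] discGroup gramM :=
  Submodule.mapQ _ _ swHom.toIntLinearMap (by
    intro x hx
    exact swx_int _ hx)

lemma swQ_dmk (x : dualLat gramM) : swQ (dmk x) = dmk (swHom x) := rfl

lemma swHom_coe (x : dualLat gramM) : (swHom x : Fin 11 → ℚ) = swx x := rfl

lemma swHom_swHom (x : dualLat gramM) : swHom (swHom x) = x := by
  apply Subtype.ext
  rw [swHom_coe, swHom_coe, swx_swx]

lemma swQ_swQ (c : discGroup gramM) : swQ (swQ c) = c := by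
  obtain ⟨x, hx⟩ := Submodule.Quotient.mk_surjective _ c
  have hx' : dmk x = c := hx
  rw [← hx', swQ_dmk, swQ_dmk, swHom_swHom]

def swE : discGroup gramM ≃+ discGroup gramM where
  toFun := swQ
  invFun := swQ
  left_inv := swQ_swQ
  right_inv := swQ_swQ
  map_add' := map_add _

lemma swE_dmk (x : dualLat gramM) : swE (dmk x) = dmk (swHom x) := rfl

lemma swE_D (i j k : ℤ) : swE (D i j k) = D j i k := by
  unfold D
  rw [swE_dmk]
  congr 1
  apply Subtype.ext
  ext t
  fin_cases t <;> simp [swHom, swx, E] <;> ring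

lemma swE_pres : PreservesDiscForm swE := by
  intro x y h
  rw [swE_dmk] at h
  obtain ⟨m, hm⟩ := q_congr _ _ h.symm
  refine ⟨m, ?_⟩
  rw [← hm]
  congr 1
  simp [swHom, swx, qQ_eq]
  ring

lemma refl_pres : PreservesDiscForm (AddEquiv.refl (discGroup gramM)) := by
  intro x y h
  exact q_congr _ _ h.symm

lemma phi_cases (φ : discGroup gramM ≃+ discGroup gramM) (hφ : PreservesDiscForm φ) :
    φ = AddEquiv.refl _ ∨ φ = swE := by
  obtain ⟨h3, ⟨h1, h2⟩ | ⟨h1, h2⟩⟩ := classify φ hφ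
  · exact Or.inl (phi_ext _ _ h1 h2 h3)
  · refine Or.inr (phi_ext _ _ ?_ ?_ ?_) <;> rw [swE_D] <;> assumption

/-- For `M = U ⊕ D8 ⊕ A1`, the group `O(q_M)` of automorphisms of the discriminant
group preserving the discriminant quadratic form has order 2, and the natural
homomorphism `O(M) → O(q_M)` is surjective. -/
theorem Oq_order_two_and_O_to_Oq_surjective_UD8A1 :
    Nat.card {φ : discGroup gramM ≃+ discGroup gramM // PreservesDiscForm φ} = 2 ∧
    (∀ φ : discGroup gramM ≃+ discGroup gramM, PreservesDiscForm φ →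
      ∃ P : Matrix (Fin 11) (Fin 11) ℤ, IsUnit P.det ∧ Pᵀ * gramM * P = gramM ∧
        ∀ x y : dualLat gramM,
          (y : Fin 11 → ℚ) = (P.map (Int.cast : ℤ → ℚ)).mulVec (x : Fin 11 → ℚ) →
            φ (dmk x) = dmk y) := by
  constructor
  · rw [Nat.card_eq_two_iff]
    refine ⟨⟨AddEquiv.refl _, refl_pres⟩, ⟨swE, swE_pres⟩, ?_, ?_⟩
    · intro h
      have h' : swE (D 1 0 0) = D 1 0 0 := by
        rw [← Subtype.mk.inj h]; rfl
      rw [swE_D, D_eq] at h'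
      omega
    · ext ⟨φ, hφ⟩
      rcases phi_cases φ hφ with rfl | rfl <;> simp
  · intro φ hφ
    rcases phi_cases φ hφ with rfl | rfl
    · refine ⟨1, by simp, by simp, ?_⟩
      intro x y h
      have : y = x := by
        apply Subtype.ext
        rw [h]
        simp
      rw [this]; rfl
    · refine ⟨sw, ?_, ?_, ?_⟩
      · unfold sw
        rw [Matrix.det_permutation]
        exact Units.isUnit _
      · decide +kernel
      · intro x y h
        rw [swE_dmk]
        congr 1
        apply Subtype.ext
        rw [h, sw_mulVec]
        rfl
end

section
/- In the rank-12 lattice L = U ⊕ U(2) ⊕ E8(2) (which is U ⊕ 𝔼(2) where 𝔼 = E8 ⊕ U is the Enriques lattice), there exists a vector v with norm v·v = -4 such that the orthogonal complement v^⊥ = {x ∈ L : x·v = 0}, with the restricted form, is isometric to the rank-11 lattice U ⊕ ⟨4⟩ ⊕ E8(2). -/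
open Matrix

/-- `L = U ⊕ U(2) ⊕ E8(2) = U ⊕ 𝔼(2)` where `𝔼 = E8 ⊕ U` is the Enriques lattice. -/
def gramL : Matrix (Fin 12) (Fin 12) ℤ := dsum (dsum latU (2 • latU)) (2 • latE8)

/-- `U ⊕ ⟨4⟩ ⊕ E8(2)`. -/
def gramC : Matrix (Fin 11) (Fin 11) ℤ := dsum (dsum latU !![(4 : ℤ)]) (2 • latE8)

def embP : Matrix (Fin 12) (Fin 11) ℤ :=
  Matrix.of fun i j => if (Fin.predAbove 2 i : Fin 11) = j then 1 else 0

theorem embP_gram : embPᵀ * gramL * embP = gramC := by decide +kernel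

theorem embP_mulVec (a : Fin 11 → ℤ) : embP.mulVec a = fun i => a (Fin.predAbove 2 i) := by
  ext i
  simp [embP, Matrix.mulVec, dotProduct]

theorem bform_embP (a b : Fin 11 → ℤ) :
    bform gramC a b = bform gramL (embP.mulVec a) (embP.mulVec b) := by
  rw [← embP_gram]
  unfold bform
  rw [← Matrix.mulVec_mulVec, ← Matrix.mulVec_mulVec, Matrix.dotProduct_mulVec,
    Matrix.vecMul_transpose]

def vecV : Fin 12 → ℤ := ![0, 0, 1, -1, 0, 0, 0, 0, 0, 0, 0, 0]

theorem gramL_vecV : gramL.mulVec vecV = ![0, 0, -2, 2, 0, 0, 0, 0, 0, 0, 0, 0] := by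
  decide +kernel

theorem bform_vecV (x : Fin 12 → ℤ) : bform gramL x vecV = 2 * (x 3 - x 2) := by
  unfold bform
  rw [gramL_vecV]
  simp [dotProduct, Fin.sum_univ_succ]
  ring

def perpW : Submodule ℤ (Fin 12 → ℤ) where
  carrier := {x | x 3 = x 2}
  add_mem' := by
    intro a b ha hb
    simp only [Set.mem_ofPred_eq, Pi.add_apply] at *
    rw [ha, hb]
  zero_mem' := rfl
  smul_mem' := by
    intro c a ha
    simp only [Set.mem_ofPred_eq, Pi.smul_apply] at *
    rw [ha]

theorem back (x : Fin 12 → ℤ) (hx : x 3 = x 2) (i : Fin 12) :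
    x ((3 : Fin 12).succAbove (Fin.predAbove 2 i : Fin 11)) = x i := by
  fin_cases i <;> first | rfl | exact hx.symm

theorem forth : ∀ j : Fin 11, (Fin.predAbove 2 ((3 : Fin 12).succAbove j) : Fin 11) = j := by
  decide

def isoE : perpW ≃ₗ[ℤ] (Fin 11 → ℤ) where
  toFun x := fun j => x.1 ((3 : Fin 12).succAbove j)
  map_add' _ _ := rfl
  map_smul' _ _ := rfl
  invFun a := ⟨fun i => a (Fin.predAbove 2 i), rfl⟩
  left_inv x := Subtype.ext (funext fun i => back x.1 x.2 i)
  right_inv a := funext fun j => congrArg a (forth j)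

theorem embP_isoE (x : perpW) : embP.mulVec (isoE x) = x.1 := by
  rw [embP_mulVec]
  exact funext fun i => back x.1 x.2 i

/-- In `L = U ⊕ U(2) ⊕ E8(2)` there is a vector `v` of norm `-4` whose orthogonal
complement `v^⊥`, with the restricted form, is isometric to `U ⊕ ⟨4⟩ ⊕ E8(2)`. -/
theorem exists_norm_neg_four_orthogonal_complement :
    ∃ v : Fin 12 → ℤ, bform gramL v v = -4 ∧
      ∃ W : Submodule ℤ (Fin 12 → ℤ), (∀ x, x ∈ W ↔ bform gramL x v = 0) ∧
        ∃ e : W ≃ₗ[ℤ] (Fin 11 → ℤ),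
          ∀ x y : W, bform gramC (e x) (e y) = bform gramL x y := by
  refine ⟨vecV, ?_, perpW, ?_, isoE, ?_⟩
  · rw [bform_vecV]; rfl
  · intro x
    rw [bform_vecV]
    change x 3 = x 2 ↔ _
    omega
  · intro x y
    rw [bform_embP, embP_isoE, embP_isoE]
end
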